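/- Let K be a UFD of characteristic p > 0, let A = K[x_1,…,x_n] be the polynomial algebra, B = K[x_1^p,…,x_n^p], and let f_1,…,f_m ∈ A with 1 ≤ m ≤ n. Set R_i = B[f_1,…,f_{i-1},f_{i+1},…,f_m] and, for i ≠ j, R_{ij} = B[f_1,…,f_m with f_i and f_j omitted]. Suppose that: for every i and all b,c ∈ R_i with b ≠ 0 and gcd(b,c) a unit, the polynomial b·f_i + c is square-free and B-free; and, if m > 1, for all i ≠ j and all b_1,b_2,c_1,c_2 ∈ R_{ij} with b_1,b_2 ≠ 0, gcd(b_1,c_1) a unit and gcd(b_2,c_2) a unit, the polynomials b_1·f_i + c_1 and b_2·f_j + c_2 have unit gcd. Then every common divisor of all m×m jacobian minors jac^{f_1,…,f_m}_{j_1,…,j_m} is invertible (i.e., dgcd(f_1,…,f_m) is a unit). -/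

import Mathlib

open MvPolynomial

/-- The monomial `f₁^{α₁} ⋯ f_m^{α_m}` for a multi-index `α ∈ Ω_m` (all exponents `< p`). -/
def pMonomial {S : Type*} [CommRing S] {m p : ℕ} (f : Fin m → S) (α : Fin m → Fin p) : S :=
  ∏ i, f i ^ (α i : ℕ)

/-- `f₁, …, f_m` are `p`-independent over the subring `B`. -/
def pIndependent {S : Type*} [CommRing S] (B : Subring S) {m : ℕ} (p : ℕ) (f : Fin m → S) : Prop :=
  ∀ b : (Fin m → Fin p) → S, (∀ α, b α ∈ B) →
    ∑ α : Fin m → Fin p, b α * pMonomial f α = 0 → ∀ α, b α = 0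

/-- `f₁, …, f_m` form a `p`-basis of `R` over `B`. -/
def IsPBasis {S : Type*} [CommRing S] (B : Subring S) (R : Set S) {m : ℕ} (p : ℕ)
    (f : Fin m → S) : Prop :=
  (↑B ⊆ R) ∧ (∀ α : Fin m → Fin p, pMonomial f α ∈ R) ∧ pIndependent B p f ∧
    ∀ r ∈ R, ∃ b : (Fin m → Fin p) → S, (∀ α, b α ∈ B) ∧
      r = ∑ α : Fin m → Fin p, b α * pMonomial f α

/-- The jacobian determinant of `f₁,…,f_m` w.r.t. the variables `x_{j₁},…,x_{j_m}`. -/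
noncomputable def jacMinor {K : Type*} [CommRing K] {n m : ℕ} (f : Fin m → MvPolynomial (Fin n) K)
    (j : Fin m → Fin n) : MvPolynomial (Fin n) K :=
  (Matrix.of fun i l => pderiv (j l) (f i)).det

/-- The subring `B = K[x₁^p, …, x_n^p]` of `K[x₁,…,x_n]`. -/
noncomputable def pPowers (K : Type*) [CommRing K] (n p : ℕ) : Subring (MvPolynomial (Fin n) K) :=
  (Algebra.adjoin K (Set.range fun i : Fin n => (X i : MvPolynomial (Fin n) K) ^ p)).toSubring

/-- `R_i = B[f₁,…,f̂ᵢ,…,f_m]`. -/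
noncomputable def Ri (K : Type*) [CommRing K] {n m : ℕ} (p : ℕ) (f : Fin m → MvPolynomial (Fin n) K)
    (i : Fin m) : Subring (MvPolynomial (Fin n) K) :=
  Subring.closure (↑(pPowers K n p) ∪ (f '' {j | j ≠ i}))

/-- `R_{ij} = B[f₁,…,f̂ᵢ,…,f̂ⱼ,…,f_m]`. -/
noncomputable def Rij (K : Type*) [CommRing K] {n m : ℕ} (p : ℕ) (f : Fin m → MvPolynomial (Fin n) K)
    (i j : Fin m) : Subring (MvPolynomial (Fin n) K) :=
  Subring.closure (↑(pPowers K n p) ∪ (f '' {l | l ≠ i ∧ l ≠ j}))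

/-- An element is `B`-free if it has no noninvertible factor from `B`. -/
def BFree {S : Type*} [CommRing S] (B : Subring S) (a : S) : Prop :=
  ∀ b ∈ B, b ∣ a → IsUnit b

/-- `C_B(f₁,…,f_m) = B₀(f₁,…,f_m) ∩ A`: those elements of `A` lying in the field of
fractions of `B[f₁,…,f_m]`. -/
def CB {S : Type*} [CommRing S] (B : Subring S) {m : ℕ} (f : Fin m → S) : Set S :=
  {a | ∃ s t : S, s ∈ Subring.closure (↑B ∪ Set.range f) ∧
      t ∈ Subring.closure (↑B ∪ Set.range f) ∧ s ≠ 0 ∧ a * s = t}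

/-- A `B`-derivation of `A`: additive, Leibniz rule, vanishing on `B`. -/
def IsBDerivation {S : Type*} [CommRing S] (B : Subring S) (d : S → S) : Prop :=
  (∀ x y, d (x + y) = d x + d y) ∧ (∀ x y, d (x * y) = x * d y + y * d x) ∧ ∀ b ∈ B, d b = 0

/-!
Suppose a prime `q` divides every minor. Write `L` and `F` for the residue fields of `A` at
`(q)` and of `B` at `(q) ∩ B`, so that `L ^ p ⊆ F`, and choose a minimal set `S` of indices such
that the images of all `fᵢ` lie in `F(f_S)`. Since `L / F` is purely inseparable of exponent
one, minimality yields derivations `A → L` dual to `f_S`, and the vanishing of the minors in `L`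
forces `S` to miss an index. For `i ∉ S`, clearing denominators in `fᵢ ∈ F(f_S)` gives
`q ∣ b fᵢ + c`, and adding a suitable `q ^ p r ^ p ∈ B` to `c` makes `b` and `c` coprime. If `S`
misses two indices, this contradicts the coprimality hypothesis. If it misses only `i`, then
`q ∉ B` because `b fᵢ + c` is `B`-free, hence some `∂ₖ q` is nonzero in `L`. Subtracting a
combination of the dual derivations from `∂ₖ` gives `D` with `D q ≠ 0` killing all `fⱼ`, `j ≠ i`,
and by the vanishing of the minors also `fᵢ`. So `D` kills `b fᵢ + c`, whence `q ^ 2 ∣ b fᵢ + c`,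
contradicting square-freeness.
-/

section PurelyInseparable

open IntermediateField Polynomial

variable {F L : Type*} [Field F] [Field L] [Algebra F L]

theorem exists_maximal_intermediateField_notMem {y : L} (hy : y ∉ (algebraMap F L).range) :
    ∃ M : IntermediateField F L, Maximal (y ∉ ·) M := by
  have hbot : y ∉ (⊥ : IntermediateField F L) := fun h => hy (IntermediateField.mem_bot.1 h)
  have hchain (c : Set (IntermediateField F L)) (hc : c ⊆ {M | y ∉ M}) (hchain : IsChain (· ≤ ·) c)
      (N) (hN : N ∈ c) : ∃ ub ∈ {M : IntermediateField F L | y ∉ M}, ∀ M ∈ c, M ≤ ub := by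
    refine ⟨sSup c, fun hmem => ?_, fun M hM => le_sSup hM⟩
    have : Nonempty c := ⟨⟨N, hN⟩⟩
    rw [sSup_eq_iSup', ← SetLike.mem_coe, coe_iSup_of_directed hchain.directed] at hmem
    obtain ⟨M, hyM⟩ := Set.mem_iUnion.1 hmem
    exact hc M.2 hyM
  obtain ⟨M, -, hM⟩ := zorn_le_nonempty₀ {M | y ∉ M} hchain ⊥ hbot
  exact ⟨M, hM⟩

theorem exists_derivation_apply_eq_one_of_derivative_minpoly {y : L}
    (hgen : Algebra.adjoin F {y} = ⊤) (hderiv : derivative (minpoly F y) = 0) :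
    ∃ D : Derivation F L L, D y = 1 := by
  have hsurj : Function.Surjective (Polynomial.aeval (R := F) y) := by
    rwa [← AlgHom.range_eq_top, ← Algebra.adjoin_singleton_eq_range_aeval]
  have hker (g : F[X]) (hg : Polynomial.aeval y g = 0) :
      Polynomial.aeval y (derivative' g) = 0 := by
    obtain ⟨h, rfl⟩ := minpoly.dvd F y hg
    simp [hderiv]
  refine ⟨Derivation.liftOfSurjective hsurj hker, ?_⟩
  simpa using Derivation.liftOfSurjective_apply hsurj hker Polynomial.X

variable {p : ℕ}

theorem minpoly_eq_X_pow_sub_C_of_pow_eq (hp : p.Prime) [CharP L p] {z : L}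
    (hz : z ∉ (algebraMap F L).range) {a : F} (ha : algebraMap F L a = z ^ p) :
    minpoly F z = Polynomial.X ^ p - Polynomial.C a := by
  have : Fact p.Prime := ⟨hp⟩
  suffices hirr : Irreducible (Polynomial.X ^ p - Polynomial.C a) from
    (minpoly.eq_of_irreducible_of_monic hirr (by simp [ha]) (monic_X_pow_sub_C a hp.ne_zero)).symm
  refine X_pow_sub_C_irreducible_of_prime hp fun b hb => hz ⟨b, frobenius_inj L p ?_⟩
  rw [frobenius_def, frobenius_def, ← map_pow, hb, ha]

theorem adjoin_simple_eq_top_of_maximal_notMem (hp : p.Prime) [CharP L p]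
    (hpow : ∀ z : L, z ^ p ∈ (algebraMap F L).range) {y : L} {M : IntermediateField F L}
    (hM : Maximal (y ∉ ·) M) : M⟮y⟯ = ⊤ := by
  have hpowM (z : L) : ∃ a : M, algebraMap M L a = z ^ p := by
    obtain ⟨a, ha⟩ := hpow z
    exact ⟨algebraMap F M a, ha⟩
  have hint (z : L) : IsIntegral M z := by
    obtain ⟨a, ha⟩ := hpowM z
    exact IsIntegral.of_pow hp.pos (ha ▸ isIntegral_algebraMap (A := L))
  have hfinrank {z : L} (hz : z ∉ M) : Module.finrank M M⟮z⟯ = p := by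
    obtain ⟨a, ha⟩ := hpowM z
    rw [adjoin.finrank (hint z), minpoly_eq_X_pow_sub_C_of_pow_eq hp (by simpa using hz) ha,
      natDegree_X_pow_sub_C]
  refine eq_top_iff.2 fun z _ => ?_
  by_cases hz : z ∈ M
  · exact M⟮y⟯.algebraMap_mem ⟨z, hz⟩
  have hyz : y ∈ M⟮z⟯ := by
    by_contra hyz
    exact hz (hM.le_of_ge (y := M⟮z⟯.restrictScalars F) hyz
      (fun a ha => M⟮z⟯.algebraMap_mem ⟨a, ha⟩) (mem_adjoin_simple_self M z))
  have := adjoin.finiteDimensional (hint z)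
  rw [eq_of_le_of_finrank_eq (adjoin_simple_le_iff.2 hyz)
    ((hfinrank hM.prop).trans (hfinrank hz).symm)]
  exact mem_adjoin_simple_self M z

theorem exists_derivation_apply_eq_one (hp : p.Prime) [CharP L p]
    (hpow : ∀ z : L, z ^ p ∈ (algebraMap F L).range) {y : L} (hy : y ∉ (algebraMap F L).range) :
    ∃ D : Derivation F L L, D y = 1 := by
  obtain ⟨M, hM⟩ := exists_maximal_intermediateField_notMem hy
  obtain ⟨a, ha⟩ := hpow y
  have hminpoly : minpoly M y = Polynomial.X ^ p - Polynomial.C (algebraMap F M a) :=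
    minpoly_eq_X_pow_sub_C_of_pow_eq hp (by simpa using hM.prop) (a := algebraMap F M a) ha
  have hint : IsIntegral F y := IsIntegral.of_pow hp.pos (ha ▸ isIntegral_algebraMap)
  have hgen : Algebra.adjoin M {y} = ⊤ := by
    rw [← adjoin_simple_toSubalgebra_of_isAlgebraic hint.tower_top.isAlgebraic,
      adjoin_simple_eq_top_of_maximal_notMem hp hpow hM, top_toSubalgebra]
  obtain ⟨D, hD⟩ := exists_derivation_apply_eq_one_of_derivative_minpoly hgen
    (by rw [hminpoly, derivative_sub, derivative_C, derivative_X_pow, CharP.cast_eq_zero]; simp)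
  exact ⟨D.restrictScalars F, hD⟩

theorem exists_minimal_adjoin_image {ι : Type*} [Finite ι] (y : ι → L) :
    ∃ S : Set ι, (∀ i, y i ∈ adjoin F (y '' S)) ∧
      ∀ i ∈ S, y i ∉ adjoin F (y '' (S \ {i})) := by
  obtain ⟨S, hS⟩ := exists_minimal_of_wellFoundedLT (fun S : Set ι => ∀ i, y i ∈ adjoin F (y '' S))
    ⟨Set.univ, fun i => subset_adjoin F _ ⟨i, trivial, rfl⟩⟩
  refine ⟨S, hS.prop, fun i hi hyi => ?_⟩
  have hle : adjoin F (y '' S) ≤ adjoin F (y '' (S \ {i})) := by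
    refine adjoin_le_iff.2 (Set.image_subset_iff.2 fun j hj => ?_)
    obtain rfl | hji := eq_or_ne j i
    · exact hyi
    · exact subset_adjoin F _ ⟨j, ⟨hj, hji⟩, rfl⟩
  exact (hS.le_of_le (fun j => hle (hS.prop j)) Set.sdiff_subset hi).2 rfl

theorem exists_dual_derivations (hp : p.Prime) [CharP L p]
    (hpow : ∀ z : L, z ^ p ∈ (algebraMap F L).range) {ι : Type*} [Finite ι] [DecidableEq ι]
    (y : ι → L) :
    ∃ S : Set ι, (∀ i, y i ∈ Algebra.adjoin F (y '' S)) ∧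
      ∃ E : ι → Derivation F L L, ∀ i ∈ S, ∀ j ∈ S, E i (y j) = if j = i then 1 else 0 := by
  obtain ⟨S, hS, hmin⟩ := exists_minimal_adjoin_image (F := F) y
  have hE (i : ι) (hi : i ∈ S) :
      ∃ E : Derivation F L L, ∀ j ∈ S, E (y j) = if j = i then 1 else 0 := by
    let N := adjoin F (y '' (S \ {i}))
    have hpowN (z : L) : z ^ p ∈ (algebraMap N L).range := by
      obtain ⟨a, ha⟩ := hpow z
      exact ⟨algebraMap F N a, ha⟩
    obtain ⟨D, hD⟩ := exists_derivation_apply_eq_one hp hpowN (y := y i) (by simpa using hmin i hi)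
    refine ⟨D.restrictScalars F, fun j hj => ?_⟩
    obtain rfl | hji := eq_or_ne j i
    · simpa using hD
    · rw [if_neg hji]
      exact D.map_algebraMap ⟨y j, subset_adjoin F _ ⟨j, ⟨hj, hji⟩, rfl⟩⟩
  have hint (z : L) : IsIntegral F z := by
    obtain ⟨a, ha⟩ := hpow z
    exact IsIntegral.of_pow hp.pos (ha ▸ isIntegral_algebraMap)
  choose! E hE using hE
  refine ⟨S, fun i => ?_, E, hE⟩
  rw [← adjoin_toSubalgebra_of_isAlgebraic fun z _ => (hint z).isAlgebraic]
  exact hS i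

end PurelyInseparable

section ResidueField

theorem exists_smul_mem_adjoin_of_mem_adjoin {R F L : Type*} [CommRing R] [Field F] [CommRing L]
    [Algebra R F] [Algebra R L] [Algebra F L] [IsScalarTower R F L]
    (hF : ∀ z : F, ∃ a b : R, algebraMap R F b ≠ 0 ∧ b • z = algebraMap R F a)
    {s : Set L} {x : L} (hx : x ∈ Algebra.adjoin F s) :
    ∃ b : R, algebraMap R F b ≠ 0 ∧ b • x ∈ Algebra.adjoin R s := by
  induction hx using Algebra.adjoin_induction with
  | mem x hx => exact ⟨1, by simp, by simpa using Algebra.subset_adjoin hx⟩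
  | algebraMap z =>
    obtain ⟨a, b, hb, hbz⟩ := hF z
    refine ⟨b, hb, ?_⟩
    rw [Algebra.algebraMap_eq_smul_one, ← smul_assoc, hbz, algebraMap_smul]
    exact Subalgebra.smul_mem _ (one_mem _) a
  | add x y _ _ hx hy =>
    obtain ⟨b, hb, hbx⟩ := hx
    obtain ⟨c, hc, hcy⟩ := hy
    refine ⟨b * c, by simp [hb, hc], ?_⟩
    rw [smul_add, mul_comm, mul_smul, mul_comm, mul_smul]
    exact add_mem (Subalgebra.smul_mem _ hbx c) (Subalgebra.smul_mem _ hcy b)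
  | mul x y _ _ hx hy =>
    obtain ⟨b, hb, hbx⟩ := hx
    obtain ⟨c, hc, hcy⟩ := hy
    refine ⟨b * c, by simp [hb, hc], ?_⟩
    rw [← smul_mul_smul_comm]
    exact mul_mem hbx hcy

theorem pow_mem_range_algebraMap_of_smul_eq {R A F L : Type*} [CommRing R] [CommRing A] [Field F]
    [Field L] [Algebra R A] [Algebra R F] [Algebra R L] [Algebra A L] [Algebra F L]
    [IsScalarTower R F L] [IsScalarTower R A L] {p : ℕ}
    (hpow : ∀ a : A, a ^ p ∈ (algebraMap R A).range) {z : L} {a b : A}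
    (hb : algebraMap A L b ≠ 0) (hz : b • z = algebraMap A L a) :
    z ^ p ∈ (algebraMap F L).range := by
  have hmem (a : A) : algebraMap A L (a ^ p) ∈ (algebraMap F L).fieldRange := by
    obtain ⟨r, hr⟩ := hpow a
    rw [← hr, ← IsScalarTower.algebraMap_apply R A L, IsScalarTower.algebraMap_apply R F L]
    exact ⟨_, rfl⟩
  have hz : z = algebraMap A L a / algebraMap A L b := by
    rw [eq_div_iff hb, ← hz, Algebra.smul_def, mul_comm]
  rw [hz, div_pow, ← map_pow, ← map_pow]
  exact (algebraMap F L).fieldRange.div_mem (hmem a) (hmem b)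

theorem exists_smul_eq_algebraMap_residueField {A : Type*} [CommRing A] (P : Ideal A) [P.IsPrime]
    (z : P.ResidueField) :
    ∃ a b : A, algebraMap A P.ResidueField b ≠ 0 ∧ b • z = algebraMap A P.ResidueField a := by
  obtain ⟨a, b, hb, rfl⟩ := IsFractionRing.div_surjective (A ⧸ P) z
  obtain ⟨a, rfl⟩ := Ideal.Quotient.mk_surjective a
  obtain ⟨b, rfl⟩ := Ideal.Quotient.mk_surjective b
  have hb : algebraMap A P.ResidueField b ≠ 0 := by
    simpa [← Ideal.Quotient.eq_zero_iff_mem] using nonZeroDivisors.ne_zero hb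
  refine ⟨a, b, hb, ?_⟩
  simp only [Ideal.algebraMap_quotient_residueField_mk, Algebra.smul_def]
  exact mul_div_cancel₀ _ hb

variable {K R A : Type*} [CommRing K] [CommRing R] [CommRing A] [Algebra K R] [Algebra K A]
  [Algebra R A] [IsScalarTower K R A] {p : ℕ}

theorem exists_dual_derivations_residueField (hp : p.Prime) [CharP A p]
    (hpow : ∀ a : A, a ^ p ∈ (algebraMap R A).range) (P : Ideal A) [P.IsPrime]
    {ι : Type*} [Finite ι] [DecidableEq ι] (f : ι → A) :
    ∃ S : Set ι,
      (∀ i, ∃ b : R, algebraMap R A b ∉ P ∧ ∃ c ∈ Algebra.adjoin R (f '' S), b • f i - c ∈ P) ∧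
      ∃ E : ι → Derivation K A P.ResidueField, (∀ i, ∀ a ∈ P, E i a = 0) ∧
        ∀ i ∈ S, ∀ j ∈ S, E i (f j) = if j = i then 1 else 0 := by
  let F := (P.under R).ResidueField
  let L := P.ResidueField
  let : Algebra F L :=
    (Ideal.ResidueField.mapₐ (P.under R) P (Algebra.ofId R A) rfl).toAlgebra
  have : IsScalarTower R F L := .of_algebraMap_eq fun r =>
    (Ideal.ResidueField.map_algebraMap (P.under R) P (algebraMap R A) rfl r).symm
  have : IsScalarTower K F L := .to₁₃₄ K R F L
  have : CharP L p := (CharP.charP_iff_prime_eq_zero hp).2 (by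
    rw [← map_natCast (algebraMap A L), CharP.cast_eq_zero, map_zero])
  have hpowL (z : L) : z ^ p ∈ (algebraMap F L).range := by
    obtain ⟨a, b, hb, hz⟩ := exists_smul_eq_algebraMap_residueField P z
    exact pow_mem_range_algebraMap_of_smul_eq hpow hb hz
  obtain ⟨S, hS, E, hE⟩ := exists_dual_derivations hp hpowL fun i => algebraMap A L (f i)
  refine ⟨S, fun i => ?_, fun i => ((E i).restrictScalars K).compAlgebraMap A,
    fun i a ha => ?_, hE⟩
  · obtain ⟨b, hb, hbi⟩ := exists_smul_mem_adjoin_of_mem_adjoin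
      (exists_smul_eq_algebraMap_residueField (P.under R)) (hS i)
    rw [← Function.comp_def, Set.image_comp, ← IsScalarTower.coe_toAlgHom' R A L,
      ← AlgHom.map_adjoin] at hbi
    obtain ⟨c, hc, hcb⟩ := hbi
    refine ⟨b, fun hbP => hb (Ideal.algebraMap_residueField_eq_zero.2 hbP), c, hc, ?_⟩
    rw [← Ideal.algebraMap_residueField_eq_zero, map_sub, sub_eq_zero]
    exact (map_smul (IsScalarTower.toAlgHom R A L) b (f i)).trans hcb.symm
  · change E i (algebraMap A L a) = 0
    rw [Ideal.algebraMap_residueField_eq_zero.2 ha, map_zero]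

end ResidueField

section JacobianMinors

theorem det_mul_eq_sum_prod_mul_det_submatrix {ι κ R : Type*} [Fintype ι] [DecidableEq ι]
    [Fintype κ] [CommRing R] (M : Matrix ι κ R) (N : Matrix κ ι R) :
    (M * N).det = ∑ r : ι → κ, (∏ i, N (r i) i) * (M.submatrix id r).det := by
  classical
  simp only [Matrix.det_apply', Matrix.mul_apply, Finset.prod_univ_sum, Finset.mul_sum,
    Fintype.piFinset_univ, Matrix.submatrix_apply, id]
  rw [Finset.sum_comm]
  refine Finset.sum_congr rfl fun r _ => Finset.sum_congr rfl fun σ _ => ?_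
  rw [Finset.prod_mul_distrib]
  ring

theorem derivation_eq_sum_pderiv {σ R V : Type*} [Fintype σ] [CommRing R] [AddCommGroup V]
    [Module R V] [Module (MvPolynomial σ R) V]
    (D : Derivation R (MvPolynomial σ R) V) (a : MvPolynomial σ R) :
    D a = ∑ k, pderiv k a • D (X k) := by
  classical
  induction a using MvPolynomial.induction_on with
  | C r => simp
  | add a b ha hb => simp [add_smul, Finset.sum_add_distrib, ha, hb]
  | mul_X a i ha =>
    simp [pderiv_X, Pi.single_apply, add_smul, Finset.sum_add_distrib, ha, mul_smul,
      Finset.smul_sum]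

variable {K L : Type*} [CommRing K] {n m : ℕ} [CommRing L] [Algebra K L]
  [Algebra (MvPolynomial (Fin n) K) L]

theorem det_derivation_apply_eq_sum_jacMinor (f : Fin m → MvPolynomial (Fin n) K)
    (D : Fin m → Derivation K (MvPolynomial (Fin n) K) L) :
    (Matrix.of fun a b => D b (f a)).det =
      ∑ r : Fin m → Fin n, (∏ b, D b (X (r b))) * algebraMap _ L (jacMinor f r) := by
  have hmul : (Matrix.of fun a b => D b (f a)) =
      (Matrix.of fun a k => algebraMap _ L (pderiv k (f a))) * Matrix.of fun k b => D b (X k) := by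
    ext a b
    simp only [Matrix.mul_apply, Matrix.of_apply, derivation_eq_sum_pderiv (D b) (f a),
      Algebra.smul_def]
  rw [hmul, det_mul_eq_sum_prod_mul_det_submatrix]
  simp only [jacMinor, RingHom.map_det]
  rfl

theorem derivation_apply_eq_zero_of_jacMinor {f : Fin m → MvPolynomial (Fin n) K}
    (hf : ∀ r, algebraMap _ L (jacMinor f r) = 0)
    {E : Fin m → Derivation K (MvPolynomial (Fin n) K) L} {i : Fin m}
    (hE : ∀ j ≠ i, ∀ a ≠ i, E j (f a) = if a = j then 1 else 0)
    {D : Derivation K (MvPolynomial (Fin n) K) L} (hD : ∀ a ≠ i, D (f a) = 0) : D (f i) = 0 := by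
  have hmatrix : (Matrix.of fun a b => Function.update E i D b (f a)) =
      (1 : Matrix (Fin m) (Fin m) L).updateRow i fun b => Function.update E i D b (f i) := by
    ext a b
    obtain rfl | ha := eq_or_ne a i
    · simp
    · obtain rfl | hb := eq_or_ne b i
      · simp [ha, hD a ha]
      · simp [ha, hb, hE b hb a ha, Matrix.one_apply]
  have hdet := det_derivation_apply_eq_sum_jacMinor f (Function.update E i D)
  rw [hmatrix, ← Matrix.cramer_transpose_apply, Matrix.transpose_one, Matrix.cramer_one] at hdet
  simpa [hf] using hdet

end JacobianMinors

section DualDerivations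

theorem derivation_sum_apply {R A V ι : Type*} [CommRing R] [CommRing A] [Algebra R A]
    [AddCommGroup V] [Module R V] [Module A V] (s : Finset ι) (E : ι → Derivation R A V) (a : A) :
    (∑ i ∈ s, E i) a = ∑ i ∈ s, E i a := by
  rw [← Finset.sum_apply]
  exact congr_fun (map_sum Derivation.coeFnAddMonoidHom E s) a

theorem exists_derivation_apply_eq_zero_of_dual {R A L ι : Type*} [CommRing R] [CommRing A]
    [Algebra R A] [CommRing L] [Algebra R L] [Algebra A L] [Finite ι] [DecidableEq ι]
    {f : ι → A} {S : Set ι} {E : ι → Derivation R A L}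
    (hE : ∀ i ∈ S, ∀ j ∈ S, E i (f j) = if j = i then 1 else 0) (D : Derivation R A L) :
    ∃ D' : Derivation R A L, (∀ i ∈ S, D' (f i) = 0) ∧ ∀ a, (∀ i, E i a = 0) → D' a = D a := by
  have hS := S.toFinite
  refine ⟨D - ∑ i ∈ hS.toFinset, D (f i) • E i, fun j hj => ?_, fun a ha => ?_⟩
  · have hterm (i : ι) (hi : i ∈ hS.toFinset) :
        (D (f i) • E i) (f j) = if j = i then D (f i) else 0 := by
      simp [hE i (hS.mem_toFinset.1 hi) j hj]
    rw [Derivation.sub_apply, derivation_sum_apply, Finset.sum_congr rfl hterm]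
    simp [hj]
  · simp [derivation_sum_apply, ha]

end DualDerivations

section PPowers

theorem totalDegree_pderiv_lt {σ R : Type*} [CommSemiring R] {k : σ} {g : MvPolynomial σ R}
    (hk : pderiv k g ≠ 0) : (pderiv k g).totalDegree < g.totalDegree := by
  obtain ⟨s, hs, hdeg⟩ := (pderiv k g).support.exists_mem_eq_sup (support_nonempty.2 hk)
    fun s => s.sum fun _ e => e
  rw [mem_support_iff, coeff_pderiv] at hs
  have hle := le_totalDegree (mem_support_iff.2 (left_ne_zero_of_mul hs))
  rw [Finsupp.sum_add_index' (by simp) (by simp), Finsupp.sum_single_index rfl] at hle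
  exact Nat.lt_of_succ_le (by rwa [totalDegree, hdeg])

theorem pderiv_eq_zero_of_dvd_pderiv {σ R : Type*} [CommRing R] [IsDomain R] {k : σ}
    {g : MvPolynomial σ R} (hg : g ∣ pderiv k g) : pderiv k g = 0 := by
  by_contra hk
  exact (totalDegree_pderiv_lt hk).not_ge (totalDegree_le_of_dvd_of_isDomain hg hk)

theorem dvd_apply_of_pderiv_eq_zero {σ R : Type*} [CommRing R] [NoZeroDivisors R] (p : ℕ)
    [CharP R p] {k : σ} {g : MvPolynomial σ R} (hg : pderiv k g = 0) {s : σ →₀ ℕ}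
    (hs : s ∈ g.support) : p ∣ s k := by
  obtain hk | hk := Nat.eq_zero_or_pos (s k)
  · simp [hk]
  have hcoeff := coeff_pderiv (i := k) g (s - Finsupp.single k 1)
  have hsingle : Finsupp.single k 1 ≤ s := Finsupp.single_le_iff.2 hk
  rw [hg, coeff_zero, tsub_add_cancel_of_le hsingle] at hcoeff
  have hcast := (mul_eq_zero.1 hcoeff.symm).resolve_left (mem_support_iff.1 hs)
  rw [← Nat.cast_succ, CharP.cast_eq_zero_iff R p, Finsupp.tsub_apply,
    Finsupp.single_eq_same] at hcast
  rwa [Nat.succ_eq_add_one, Nat.sub_add_cancel hk] at hcast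

variable {K : Type*} [CommRing K] {n p : ℕ}

theorem X_pow_mem_pPowers (k : Fin n) : X k ^ p ∈ pPowers K n p :=
  Algebra.subset_adjoin ⟨k, rfl⟩

theorem C_mem_pPowers (r : K) : C r ∈ pPowers K n p :=
  Subalgebra.algebraMap_mem (Algebra.adjoin K _) r

theorem pow_mem_pPowers [ExpChar K p] (a : MvPolynomial (Fin n) K) : a ^ p ∈ pPowers K n p := by
  induction a using MvPolynomial.induction_on with
  | C r => exact C_pow (σ := Fin n) r p ▸ C_mem_pPowers (r ^ p)
  | add a b ha hb => exact add_pow_expChar a b p ▸ add_mem ha hb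
  | mul_X a k ha => exact mul_pow a (X k) p ▸ mul_mem ha (X_pow_mem_pPowers k)

theorem mem_pPowers_of_pderiv_eq_zero [NoZeroDivisors K] [CharP K p]
    {g : MvPolynomial (Fin n) K} (hg : ∀ k, pderiv k g = 0) : g ∈ pPowers K n p := by
  rw [g.as_sum]
  refine sum_mem fun s hs => ?_
  rw [monomial_eq]
  refine mul_mem (C_mem_pPowers _) (prod_mem fun k _ => ?_)
  obtain ⟨e, he⟩ := dvd_apply_of_pderiv_eq_zero p (hg k) hs
  simp only [he, pow_mul]
  exact pow_mem (X_pow_mem_pPowers k) e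

theorem exists_not_dvd_pderiv_of_notMem_pPowers [IsDomain K] [CharP K p]
    {g : MvPolynomial (Fin n) K} (hg : g ∉ pPowers K n p) : ∃ k, ¬ g ∣ pderiv k g := by
  contrapose! hg
  exact mem_pPowers_of_pderiv_eq_zero fun k => pderiv_eq_zero_of_dvd_pderiv (hg k)

variable {V : Type*} [AddCommGroup V] [Module K V] [Module (MvPolynomial (Fin n) K) V]

theorem derivation_apply_eq_zero_of_mem_pPowers [CharP K p]
    (D : Derivation K (MvPolynomial (Fin n) K) V) {c : MvPolynomial (Fin n) K}
    (hc : c ∈ pPowers K n p) : D c = 0 := by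
  refine Derivation.eqOn_adjoin (D1 := D) (D2 := 0) ?_ hc
  rintro _ ⟨k, rfl⟩
  simp [Derivation.leibniz_pow, ← Nat.cast_smul_eq_nsmul (MvPolynomial (Fin n) K)]

theorem derivation_apply_eq_zero_of_mem_closure [CharP K p]
    (D : Derivation K (MvPolynomial (Fin n) K) V) {s : Set (MvPolynomial (Fin n) K)}
    (hs : ∀ a ∈ s, D a = 0) {c : MvPolynomial (Fin n) K}
    (hc : c ∈ Subring.closure (↑(pPowers K n p) ∪ s)) : D c = 0 := by
  refine Derivation.eqOn_adjoin (D1 := D) (D2 := 0) (s := ↑(pPowers K n p) ∪ s) ?_ ?_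
  · rintro a (ha | ha)
    · exact derivation_apply_eq_zero_of_mem_pPowers D ha
    · exact hs a ha
  · exact (Subring.closure_le (t := (Algebra.adjoin K _).toSubring)).2 Algebra.subset_adjoin hc

theorem closure_pPowers_union_image_le_Ri {m : ℕ} {f : Fin m → MvPolynomial (Fin n) K}
    {S : Set (Fin m)} {i : Fin m} (hi : i ∉ S) :
    Subring.closure (↑(pPowers K n p) ∪ f '' S) ≤ Ri K p f i :=
  Subring.closure_mono (Set.union_subset_union_right _ (Set.image_mono
    fun _ ha => ne_of_mem_of_not_mem ha hi))

theorem closure_pPowers_union_image_le_Rij {m : ℕ} {f : Fin m → MvPolynomial (Fin n) K}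
    {S : Set (Fin m)} {i j : Fin m} (hi : i ∉ S) (hj : j ∉ S) :
    Subring.closure (↑(pPowers K n p) ∪ f '' S) ≤ Rij K p f i j :=
  Subring.closure_mono (Set.union_subset_union_right _ (Set.image_mono
    fun _ ha => ⟨ne_of_mem_of_not_mem ha hi, ne_of_mem_of_not_mem ha hj⟩))

end PPowers

section UniqueFactorization

theorem exists_isRelPrime_add_mul_pow {A : Type*} [CommRing A] [IsDomain A]
    [UniqueFactorizationMonoid A] {b u : A} (hb : b ≠ 0) (hbu : IsRelPrime b u) (c : A) {k : ℕ}
    (hk : k ≠ 0) : ∃ r : A, IsRelPrime b (c + u * r ^ k) := by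
  classical
  refine ⟨((UniqueFactorizationMonoid.factors b).filter fun q => ¬ q ∣ c).prod, ?_⟩
  rw [UniqueFactorizationMonoid.isRelPrime_iff_no_prime_factors hb]
  intro q hqb hqr hq
  obtain ⟨a, ha, hqa⟩ :=
    UniqueFactorizationMonoid.exists_mem_factors_of_dvd hb hq.irreducible hqb
  by_cases hqc : q ∣ c
  · obtain hqu | hqr := hq.dvd_or_dvd ((dvd_add_right hqc).1 hqr)
    · exact hq.not_isUnit (hbu hqb hqu)
    · obtain ⟨a, ha, hqa⟩ := hq.exists_mem_multiset_dvd (hq.dvd_of_dvd_pow hqr)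
      obtain ⟨ha, hac⟩ := Multiset.mem_filter.1 ha
      have hqa := hq.associated_of_dvd (UniqueFactorizationMonoid.prime_of_factor a ha) hqa
      exact hac (hqa.symm.dvd.trans hqc)
  · refine hqc ((dvd_add_left (dvd_mul_of_dvd_right (dvd_pow ?_ hk) u)).1 hqr)
    refine hqa.dvd.trans (Multiset.dvd_prod (Multiset.mem_filter.2 ⟨ha, fun hac => ?_⟩))
    exact hqc (hqa.dvd.trans hac)

theorem mul_self_dvd_of_derivation_apply_eq_zero {R A L : Type*} [CommRing R] [CommRing A]
    [Algebra R A] [CommRing L] [IsDomain L] [Algebra A L] [Module R L] {q x : A}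
    (hker : ∀ a, algebraMap A L a = 0 ↔ q ∣ a) {D : Derivation R A L} (hx : q ∣ x)
    (hDx : D x = 0) (hDq : D q ≠ 0) : q * q ∣ x := by
  obtain ⟨y, rfl⟩ := hx
  rw [D.leibniz, Algebra.smul_def, Algebra.smul_def, (hker q).2 dvd_rfl, zero_mul, zero_add] at hDx
  exact mul_dvd_mul_left q ((hker y).1 ((mul_eq_zero.1 hDx).resolve_right hDq))

theorem exists_isRelPrime_dvd_mul_add {A : Type*} [CommRing A] [IsDomain A]
    [UniqueFactorizationMonoid A] {p : ℕ} (hp : p ≠ 0) {R : Subring A} (hR : ∀ a : A, a ^ p ∈ R)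
    {q b c x : A} (hq : Prime q) (hb : ¬ q ∣ b) (hc : c ∈ R) (hx : q ∣ b * x - c) :
    ∃ d ∈ R, IsRelPrime b d ∧ q ∣ b * x + d := by
  have hbq : IsRelPrime b (q ^ p) := (hq.irreducible.isRelPrime_iff_not_dvd.2 hb).symm.pow_right
  obtain ⟨r, hr⟩ := exists_isRelPrime_add_mul_pow (by rintro rfl; exact hb (dvd_zero q)) hbq (-c) hp
  refine ⟨-c + q ^ p * r ^ p, add_mem (neg_mem hc) (mul_mem (hR q) (hR r)), hr, ?_⟩
  rw [← add_assoc, ← sub_eq_add_neg]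
  exact dvd_add hx (dvd_mul_of_dvd_left (dvd_pow_self q hp) _)

theorem exists_prime_and_dvd {A : Type*} [CommMonoidWithZero A] [UniqueFactorizationMonoid A]
    (hA : ∃ q : A, Prime q) {g : A} (hg : ¬ IsUnit g) :
    ∃ q, Prime q ∧ q ∣ g := by
  obtain rfl | hg0 := eq_or_ne g 0
  · obtain ⟨q, hq⟩ := hA
    exact ⟨q, hq, dvd_zero q⟩
  · obtain ⟨q, hq, hqg⟩ := WfDvdMonoid.exists_irreducible_factor hg hg0
    exact ⟨q, hq.prime, hqg⟩

end UniqueFactorization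

section ReductionModPrime

theorem algebraMap_residueField_span_singleton_eq_zero_iff {A : Type*} [CommRing A] {q : A}
    [(Ideal.span {q}).IsPrime] {a : A} :
    algebraMap A (Ideal.span {q}).ResidueField a = 0 ↔ q ∣ a := by
  rw [Ideal.algebraMap_residueField_eq_zero, Ideal.mem_span_singleton]

variable {K : Type*} [CommRing K] {n m p : ℕ} {f : Fin m → MvPolynomial (Fin n) K}

theorem exists_dual_derivations_pPowers (hp : p.Prime) [CharP K p]
    (P : Ideal (MvPolynomial (Fin n) K)) [P.IsPrime] (f : Fin m → MvPolynomial (Fin n) K) :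
    ∃ S : Set (Fin m),
      (∀ i, ∃ b ∈ pPowers K n p, b ∉ P ∧
        ∃ c ∈ Subring.closure (↑(pPowers K n p) ∪ f '' S), b * f i - c ∈ P) ∧
      ∃ E : Fin m → Derivation K (MvPolynomial (Fin n) K) P.ResidueField,
        (∀ i, ∀ a ∈ P, E i a = 0) ∧
        ∀ i ∈ S, ∀ j ∈ S, E i (f j) = if j = i then 1 else 0 := by
  have : ExpChar K p := .prime hp
  let B := Algebra.adjoin K (Set.range fun i : Fin n => (X i : MvPolynomial (Fin n) K) ^ p)
  obtain ⟨S, hS, E, hEP, hE⟩ := exists_dual_derivations_residueField (R := B) (K := K) hp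
    (fun a => ⟨⟨a ^ p, pow_mem_pPowers a⟩, rfl⟩) P f
  refine ⟨S, fun i => ?_, E, hEP, hE⟩
  obtain ⟨b, hb, c, hc, hbc⟩ := hS i
  refine ⟨b, b.2, hb, c, ?_, hbc⟩
  rw [← Subalgebra.mem_toSubring, Algebra.adjoin_eq_ring_closure] at hc
  have hrange : Set.range (algebraMap B (MvPolynomial (Fin n) K)) = pPowers K n p :=
    Subtype.range_coe
  rwa [hrange] at hc

theorem exists_dual_derivations_of_prime [IsDomain K] [UniqueFactorizationMonoid K] (hp : p.Prime)
    [CharP K p] {q : MvPolynomial (Fin n) K} (hq : Prime q) [(Ideal.span {q}).IsPrime]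
    (f : Fin m → MvPolynomial (Fin n) K) :
    ∃ S : Set (Fin m),
      (∀ i, ∃ b ∈ Subring.closure (↑(pPowers K n p) ∪ f '' S), b ≠ 0 ∧
        ∃ c ∈ Subring.closure (↑(pPowers K n p) ∪ f '' S), IsRelPrime b c ∧ q ∣ b * f i + c) ∧
      ∃ E : Fin m → Derivation K (MvPolynomial (Fin n) K) (Ideal.span {q}).ResidueField,
        (∀ i, E i q = 0) ∧ ∀ i ∈ S, ∀ j ∈ S, E i (f j) = if j = i then 1 else 0 := by
  have : ExpChar K p := .prime hp
  have hB (S : Set (Fin m)) : pPowers K n p ≤ Subring.closure (↑(pPowers K n p) ∪ f '' S) :=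
    fun _ hb => Subring.subset_closure (Or.inl hb)
  obtain ⟨S, hS, E, hEq, hE⟩ := exists_dual_derivations_pPowers hp (Ideal.span {q}) f
  refine ⟨S, fun i => ?_, E, fun i => hEq i q (Ideal.mem_span_singleton_self q), hE⟩
  obtain ⟨b, hb, hqb, c, hc, hbc⟩ := hS i
  rw [Ideal.mem_span_singleton] at hqb hbc
  obtain ⟨d, hd, hbd, hqd⟩ := exists_isRelPrime_dvd_mul_add hp.ne_zero
    (fun a => hB S (pow_mem_pPowers a)) hq hqb hc hbc
  exact ⟨b, hB S hb, fun hb0 => hqb (hb0 ▸ dvd_zero q), d, hd, hbd, hqd⟩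

variable {L : Type*} [CommRing L] [Algebra K L] [Algebra (MvPolynomial (Fin n) K) L]

theorem exists_notMem_of_dual_derivations [Nontrivial L] [Nonempty (Fin m)]
    (hf : ∀ r, algebraMap _ L (jacMinor f r) = 0) {S : Set (Fin m)}
    {E : Fin m → Derivation K (MvPolynomial (Fin n) K) L}
    (hE : ∀ i ∈ S, ∀ j ∈ S, E i (f j) = if j = i then 1 else 0) : ∃ i, i ∉ S := by
  by_contra! hS
  obtain ⟨i⟩ := ‹Nonempty (Fin m)›
  have hzero : E i (f i) = 0 := derivation_apply_eq_zero_of_jacMinor hf (i := i)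
    (fun j _ a _ => hE j (hS j) a (hS a))
    fun a ha => (hE i (hS i) a (hS a)).trans (if_neg ha)
  simpa [hzero] using hE i (hS i) i (hS i)

theorem mul_self_dvd_of_jacMinor [IsDomain K] [IsDomain L]
    [IsScalarTower K (MvPolynomial (Fin n) K) L] [CharP K p]
    {q : MvPolynomial (Fin n) K} (hker : ∀ a, algebraMap _ L a = 0 ↔ q ∣ a)
    (hq : q ∉ pPowers K n p) (hf : ∀ r, q ∣ jacMinor f r) {i : Fin m}
    {E : Fin m → Derivation K (MvPolynomial (Fin n) K) L} (hEq : ∀ j, E j q = 0)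
    (hE : ∀ j ≠ i, ∀ a ≠ i, E j (f a) = if a = j then 1 else 0)
    {b c : MvPolynomial (Fin n) K} (hb : b ∈ Ri K p f i) (hc : c ∈ Ri K p f i)
    (hbc : q ∣ b * f i + c) : q * q ∣ b * f i + c := by
  obtain ⟨k, hk⟩ := exists_not_dvd_pderiv_of_notMem_pPowers hq
  obtain ⟨D, hDf, hDq⟩ := exists_derivation_apply_eq_zero_of_dual (S := {i}ᶜ) hE
    ((Algebra.linearMap (MvPolynomial (Fin n) K) L).compDer (pderiv k))
  have hDi : D (f i) = 0 :=
    derivation_apply_eq_zero_of_jacMinor (fun r => (hker _).2 (hf r)) hE hDf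
  have hDR {a} (ha : a ∈ Ri K p f i) : D a = 0 :=
    derivation_apply_eq_zero_of_mem_closure D (Set.forall_mem_image.2 hDf) ha
  refine mul_self_dvd_of_derivation_apply_eq_zero hker hbc (D := D) ?_ ?_
  · rw [map_add, D.leibniz, hDi, hDR hb, hDR hc, smul_zero, smul_zero, add_zero, add_zero]
  · rw [hDq q hEq]
    exact fun h => hk ((hker _).1 h)

end ReductionModPrime

/-- If `b·fᵢ + c` is square-free and `B`-free for all suitable `b, c ∈ Rᵢ` and, when `m > 1`,
`b₁·fᵢ + c₁` and `b₂·fⱼ + c₂` have unit gcd for all suitable data in `R_{ij}`, then every common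
divisor of all `m×m` jacobian minors of `f₁,…,f_m` is invertible (`dgcd(f₁,…,f_m) ∼ 1`). -/
theorem dgcd_isUnit_of_factor_conditions
    {K : Type*} [CommRing K] [IsDomain K] [UniqueFactorizationMonoid K]
    (p : ℕ) (hp : 0 < p) [CharP K p] {n m : ℕ} (hm : 1 ≤ m) (hmn : m ≤ n)
    (f : Fin m → MvPolynomial (Fin n) K)
    (h1 : ∀ i : Fin m, ∀ b c : MvPolynomial (Fin n) K,
      b ∈ Ri K p f i → c ∈ Ri K p f i → b ≠ 0 → IsRelPrime b c →
      Squarefree (b * f i + c) ∧ BFree (pPowers K n p) (b * f i + c))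
    (h2 : 1 < m → ∀ i j : Fin m, i ≠ j →
      ∀ b₁ b₂ c₁ c₂ : MvPolynomial (Fin n) K,
      b₁ ∈ Rij K p f i j → b₂ ∈ Rij K p f i j →
      c₁ ∈ Rij K p f i j → c₂ ∈ Rij K p f i j →
      b₁ ≠ 0 → b₂ ≠ 0 → IsRelPrime b₁ c₁ → IsRelPrime b₂ c₂ →
      IsRelPrime (b₁ * f i + c₁) (b₂ * f j + c₂)) :
    ∀ g : MvPolynomial (Fin n) K,
      (∀ j : Fin m → Fin n, g ∣ jacMinor f j) → IsUnit g := by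
  have hp' : p.Prime := (CharP.char_is_prime_or_zero K p).resolve_right hp.ne'
  have : Nonempty (Fin m) := ⟨⟨0, hm⟩⟩
  intro g hg
  by_contra hgu
  obtain ⟨q, hq, hqg⟩ := exists_prime_and_dvd ⟨X ⟨0, hm.trans hmn⟩, X_prime⟩ hgu
  have hqf (r) : q ∣ jacMinor f r := hqg.trans (hg r)
  have : (Ideal.span {q}).IsPrime := (Ideal.span_singleton_prime hq.ne_zero).2 hq
  obtain ⟨S, hS, E, hEq, hE⟩ := exists_dual_derivations_of_prime hp' hq f
  obtain ⟨i, hi⟩ := exists_notMem_of_dual_derivations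
    (fun r => algebraMap_residueField_span_singleton_eq_zero_iff.2 (hqf r)) hE
  obtain ⟨b, hb, hb0, c, hc, hbc, hqi⟩ := hS i
  by_cases hone : ∀ j ≠ i, j ∈ S
  · have hRi := closure_pPowers_union_image_le_Ri (K := K) (p := p) (f := f) hi
    obtain ⟨hsq, hfree⟩ := h1 i b c (hRi hb) (hRi hc) hb0 hbc
    have hqB : q ∉ pPowers K n p := fun hqB => hq.not_isUnit (hfree q hqB hqi)
    exact hq.not_isUnit (hsq q (mul_self_dvd_of_jacMinor
      (fun _ => algebraMap_residueField_span_singleton_eq_zero_iff) hqB hqf hEq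
      (fun j hj a ha => hE j (hone j hj) a (hone a ha)) (hRi hb) (hRi hc) hqi))
  · push Not at hone
    obtain ⟨j, hji, hj⟩ := hone
    have hRij := closure_pPowers_union_image_le_Rij (K := K) (p := p) (f := f) hi hj
    obtain ⟨b', hb', hb0', c', hc', hbc', hqj⟩ := hS j
    have hm1 : 1 < m := by simpa using Fintype.one_lt_card_iff.2 ⟨j, i, hji⟩
    exact hq.not_isUnit (h2 hm1 i j hji.symm b b' c c' (hRij hb) (hRij hb') (hRij hc)
      (hRij hc') hb0 hb0' hbc hbc' hqi hqj)
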